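/- arXiv:1808.06291 — 2 statements merged into one kernel-verified Lean document; each statement's English description precedes it below -/
import Mathlib

section
/- Let λ be an r-partition of n and c an integer. If λ has weight c with respect to the parameters (q, Q₁, Q₂, …, Q_r), then the conjugate r-partition λ' has weight c with respect to the parameters (q^{−1}, Q_r, Q_{r−1}, …, Q₁). Equivalently, the weight of λ' computed with q replaced by q^{−1} and the cyclotomic parameters reversed equals the weight of λ. -/
open scoped BigOperators

/-- `lam : ℕ → ℕ` encodes a partition: row `i` (0-indexed) has `lam i` boxes.
It must be non-increasing with finitely many nonzero parts. -/
def IsPartitionFun (lam : ℕ → ℕ) : Prop :=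
  (∀ ⦃i j : ℕ⦄, i ≤ j → lam j ≤ lam i) ∧ ∃ N : ℕ, ∀ i, N ≤ i → lam i = 0

/-- The size `|λ|` of a partition. -/
noncomputable def partSize (lam : ℕ → ℕ) : ℕ := ∑ᶠ i, lam i

/-- The conjugate partition: `(conjParts lam) j = #{i : lam i ≥ j+1}`
(column `j`, 0-indexed, has as many boxes as there are rows of length `> j`). -/
noncomputable def conjParts (lam : ℕ → ℕ) : ℕ → ℕ :=
  fun j => Set.ncard {i : ℕ | j < lam i}

/-- An `r`-partition (multipartition) is an `r`-tuple of partitions. -/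
def IsMultipartition {r : ℕ} (lam : Fin r → ℕ → ℕ) : Prop :=
  ∀ k, IsPartitionFun (lam k)

/-- The size of an `r`-partition. -/
noncomputable def msize {r : ℕ} (lam : Fin r → ℕ → ℕ) : ℕ :=
  ∑ k : Fin r, partSize (lam k)

/-- The conjugate of an `r`-partition `λ = (λ⁽¹⁾, …, λ⁽ʳ⁾)` is
`λ' = (λ⁽ʳ⁾', …, λ⁽¹⁾')`. -/
noncomputable def mconj {r : ℕ} (lam : Fin r → ℕ → ℕ) : Fin r → ℕ → ℕ :=
  fun k => conjParts (lam k.rev)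

/-- Dominance order on `r`-partitions:
`λ ⊵ μ` iff for every component `s` and every `j ≥ 1`,
`Σ_{t<s} |λ⁽ᵗ⁾| + Σ_{i=1}^{j} λ⁽ˢ⁾ᵢ ≥ Σ_{t<s} |μ⁽ᵗ⁾| + Σ_{i=1}^{j} μ⁽ˢ⁾ᵢ`. -/
def mDominates {r : ℕ} (lam mu : Fin r → ℕ → ℕ) : Prop :=
  ∀ (s : Fin r) (j : ℕ),
    ((∑ t ∈ Finset.univ.filter (fun t : Fin r => t < s), partSize (mu t)) +
      ∑ i ∈ Finset.range (j + 1), mu s i) ≤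
    ((∑ t ∈ Finset.univ.filter (fun t : Fin r => t < s), partSize (lam t)) +
      ∑ i ∈ Finset.range (j + 1), lam s i)

/-- The Young diagram of an `r`-partition: nodes `(i, j, k)` (all 0-indexed)
with `j < λ⁽ᵏ⁾ᵢ`. -/
def mDiagram {r : ℕ} (lam : Fin r → ℕ → ℕ) : Set (ℕ × ℕ × Fin r) :=
  {x | x.2.1 < lam x.2.2 x.1}

/-- The residue of the node `(i, j, k)` with respect to `(q, Q)` is
`q^(j-i) * Q k` (0-indexed `i, j`, which gives the same value as 1-indexing). -/
noncomputable def res {r : ℕ} {K : Type*} [Field K] (q : K) (Q : Fin r → K)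
    (x : ℕ × ℕ × Fin r) : K :=
  q ^ ((x.2.1 : ℤ) - (x.1 : ℤ)) * Q x.2.2

/-- `resCount q Q lam f = c_f(λ)`, the number of nodes of `[λ]` of residue `f`. -/
noncomputable def resCount {r : ℕ} {K : Type*} [Field K] (q : K) (Q : Fin r → K)
    (lam : Fin r → ℕ → ℕ) (f : K) : ℕ :=
  Set.ncard {x ∈ mDiagram lam | res q Q x = f}

/-- Fayers' weight of an `r`-partition:
`w(λ) = (Σ_{k} c_{Q_k}(λ)) - (1/2) Σ_{f ∈ K^×} (c_f(λ) - c_{qf}(λ))²`. -/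
noncomputable def mweight {r : ℕ} {K : Type*} [Field K] (q : K) (Q : Fin r → K)
    (lam : Fin r → ℕ → ℕ) : ℚ :=
  (∑ k : Fin r, (resCount q Q lam (Q k) : ℚ)) -
    (1 / 2) * ∑ᶠ f ∈ {f : K | f ≠ 0},
      (((resCount q Q lam f : ℤ) - (resCount q Q lam (q * f) : ℤ)) : ℚ) ^ 2

/-!
Swapping rows with columns and reversing the order of the components is a bijection `[λ] → [λ']`.
It negates the exponent `j - i`, so it preserves residues when `q` is replaced by `q⁻¹` and `Q` is
reversed; hence every `c_f` is unchanged. In the weight, the summands `(c_f - c_{qf})²` become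
`(c_f - c_{q⁻¹f})²`, which is the same family of numbers reindexed along `f ↦ qf`.
-/

theorem mem_iff_lt_ncard_of_isLowerSet {s : Set ℕ} (hs : IsLowerSet s) (hfin : s.Finite) {i : ℕ} :
    i ∈ s ↔ i < s.ncard := by
  obtain rfl | ⟨m, rfl⟩ := hs.eq_univ_or_Iio
  · exact absurd hfin Set.infinite_univ
  · rw [Set.ncard_Iio_nat, Set.mem_Iio]

theorem IsPartitionFun.finite_setOf_lt {lam : ℕ → ℕ} (h : IsPartitionFun lam) (j : ℕ) :
    {i | j < lam i}.Finite := by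
  obtain ⟨N, hN⟩ := h.2
  refine (Set.finite_Iio N).subset fun i hi => ?_
  by_contra hNi
  exact absurd (hN i (not_lt.mp hNi)) (Nat.ne_zero_of_lt hi)

theorem IsPartitionFun.lt_conjParts_iff {lam : ℕ → ℕ} (h : IsPartitionFun lam) {i j : ℕ} :
    i < conjParts lam j ↔ j < lam i :=
  have isLowerSet : IsLowerSet {i | j < lam i} := fun _ _ hle hlt => hlt.trans_le (h.1 hle)
  (mem_iff_lt_ncard_of_isLowerSet isLowerSet (h.finite_setOf_lt j)).symm

/-- Conjugation of nodes, `(i, j, k) ↦ (j, i, r + 1 - k)` in 1-indexed notation: the involution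
carrying the Young diagram of an `r`-partition to that of its conjugate. -/
def conjNode {r : ℕ} (x : ℕ × ℕ × Fin r) : ℕ × ℕ × Fin r :=
  (x.2.1, x.1, x.2.2.rev)

theorem conjNode_involutive {r : ℕ} : Function.Involutive (conjNode (r := r)) := fun x => by
  simp only [conjNode, Fin.rev_rev]

theorem IsMultipartition.conjNode_mem_mDiagram_mconj_iff {r : ℕ} {lam : Fin r → ℕ → ℕ}
    (hlam : IsMultipartition lam) {x : ℕ × ℕ × Fin r} :
    conjNode x ∈ mDiagram (mconj lam) ↔ x ∈ mDiagram lam := by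
  simp only [mDiagram, mconj, conjNode, Set.mem_ofPred_eq, Fin.rev_rev, (hlam _).lt_conjParts_iff]

theorem finsum_ne_zero_sub_inv_mul_sq {G R : Type*} [GroupWithZero G] [Ring R] {q : G}
    (hq : q ≠ 0) (c : G → R) :
    ∑ᶠ f ∈ {f : G | f ≠ 0}, (c f - c (q⁻¹ * f)) ^ 2 =
      ∑ᶠ f ∈ {f : G | f ≠ 0}, (c f - c (q * f)) ^ 2 := by
  have bijOn : Set.BijOn (q * ·) {f : G | f ≠ 0} {f : G | f ≠ 0} :=
    (Equiv.mulLeft₀ q hq).bijOn fun _ => mul_ne_zero_iff_left hq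
  refine (finsum_mem_eq_of_bijOn _ bijOn fun f _ => ?_).symm
  rw [inv_mul_cancel_left₀ hq, ← neg_sub, neg_sq]

section Weight

variable {K : Type*} [Field K] {r : ℕ}

theorem res_inv_conjNode (q : K) (Q : Fin r → K) (x : ℕ × ℕ × Fin r) :
    res q⁻¹ (fun k => Q k.rev) (conjNode x) = res q Q x := by
  simp only [res, conjNode, inv_zpow', neg_sub, Fin.rev_rev]

theorem IsMultipartition.resCount_inv_mconj {lam : Fin r → ℕ → ℕ} (hlam : IsMultipartition lam)
    (q : K) (Q : Fin r → K) (f : K) :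
    resCount q⁻¹ (fun k => Q k.rev) (mconj lam) f = resCount q Q lam f := by
  have preimage_eq :
      conjNode ⁻¹' {x ∈ mDiagram (mconj lam) | res q⁻¹ (fun k => Q k.rev) x = f} =
        {x ∈ mDiagram lam | res q Q x = f} := by
    ext x
    simp only [Set.mem_preimage, Set.mem_ofPred_eq, hlam.conjNode_mem_mDiagram_mconj_iff,
      res_inv_conjNode]
  rw [resCount, resCount, ← preimage_eq]
  refine (Set.ncard_preimage_of_injective_subset_range conjNode_involutive.injective ?_).symm
  exact conjNode_involutive.surjective.range_eq ▸ Set.subset_univ _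

theorem weight_conj_inv_params_general {q : K} (hq0 : q ≠ 0) (Q : Fin r → K)
    {lam : Fin r → ℕ → ℕ} (hlam : IsMultipartition lam) :
    mweight q⁻¹ (fun k => Q k.rev) (mconj lam) = mweight q Q lam := by
  simp only [mweight, hlam.resCount_inv_mconj]
  congr 1
  · exact Equiv.sum_comp Fin.revPerm fun k => (resCount q Q lam (Q k) : ℚ)
  · rw [finsum_ne_zero_sub_inv_mul_sq hq0 fun f => ((resCount q Q lam f : ℤ) : ℚ)]

end Weight

/-- If `λ` has weight `c` w.r.t. `(q, Q₁, …, Q_r)`, then `λ'` has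
weight `c` w.r.t. `(q⁻¹, Q_r, …, Q₁)`. -/
theorem weight_conj_inv_params {K : Type*} [Field K] (q : K) (hq0 : q ≠ 0) (hq1 : q ≠ 1)
    {r : ℕ} (hr : 2 ≤ r) (a : Fin r → ℤ) (Q : Fin r → K) (hQ : ∀ k, Q k = q ^ a k)
    {n : ℕ} (lam : Fin r → ℕ → ℕ) (hlam : IsMultipartition lam) (hn : msize lam = n)
    (c : ℤ) (hc : mweight q Q lam = (c : ℚ)) :
    mweight q⁻¹ (fun k => Q k.rev) (mconj lam) = (c : ℚ) := by
  rw [weight_conj_inv_params_general hq0 Q hlam, hc]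
end

section
/- Let λ be a bipartition. Then Σ_{f∈K^×} (c_f(λ) − c_{qf}(λ))² = Σ_{f∈K^×} (c_f(λ') − c_{qf}(λ'))², where both sums have finite support. -/
open scoped BigOperators

/-!
Transposing a node, `(i, j, k) ↦ (j, i, r - 1 - k)`, maps the diagram of `λ'` onto that of `λ`,
and the residues of a node and of its transpose multiply to `Q k * Q k.rev`. For a bipartition this
is `P = Q 0 * Q 1` whatever `k` is, so `c_f(λ') = c_{P/f}(λ)`. Hence the involution `f ↦ P / (q f)`
of `K^×` interchanges the two differences `c_f - c_{qf}` up to sign.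
-/

theorem eq_Iio_ncard_of_isLowerSet {s : Set ℕ} (hs : IsLowerSet s) (hfin : s.Finite) :
    s = Set.Iio s.ncard := by
  obtain rfl | ⟨n, rfl⟩ := hs.eq_univ_or_Iio
  · exact absurd hfin Set.infinite_univ
  · rw [Set.ncard_Iio_nat]

namespace IsPartitionFun

variable {lam : ℕ → ℕ}

theorem isLowerSet_setOf_lt (h : IsPartitionFun lam) (j : ℕ) : IsLowerSet {i | j < lam i} :=
  fun _ _ hle hlt => lt_of_lt_of_le hlt (h.1 hle)

theorem finite_setOf_lt_s6 (h : IsPartitionFun lam) (j : ℕ) : {i | j < lam i}.Finite := by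
  obtain ⟨N, hN⟩ := h.2
  refine (Set.finite_Iio N).subset fun i (hi : j < lam i) => ?_
  by_contra hNi
  exact Nat.not_lt_zero j (hN i (not_lt.mp hNi) ▸ hi)

theorem lt_conjParts_iff_s6 (h : IsPartitionFun lam) {i j : ℕ} : i < conjParts lam j ↔ j < lam i :=
  (Set.ext_iff.mp
    (eq_Iio_ncard_of_isLowerSet (h.isLowerSet_setOf_lt j) (h.finite_setOf_lt_s6 j)) i).symm

end IsPartitionFun

section Transpose

variable {r : ℕ}

/-- The transpose of a node of an `r`-partition: rows and columns are swapped and the order of the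
components is reversed, as in the definition of `mconj`. -/
def nodeTranspose (x : ℕ × ℕ × Fin r) : ℕ × ℕ × Fin r :=
  (x.2.1, x.1, x.2.2.rev)

theorem nodeTranspose_involutive : Function.Involutive (nodeTranspose (r := r)) :=
  fun x => by simp only [nodeTranspose, Fin.rev_rev]

theorem mem_mDiagram_mconj_iff {lam : Fin r → ℕ → ℕ} (hlam : IsMultipartition lam)
    {x : ℕ × ℕ × Fin r} : x ∈ mDiagram (mconj lam) ↔ nodeTranspose x ∈ mDiagram lam :=
  (hlam x.2.2.rev).lt_conjParts_iff_s6

variable {K : Type*} [Field K] {q : K} {Q : Fin r → K}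

theorem res_mul_res_nodeTranspose (hq : q ≠ 0) (x : ℕ × ℕ × Fin r) :
    res q Q x * res q Q (nodeTranspose x) = Q x.2.2 * Q x.2.2.rev := by
  obtain ⟨i, j, k⟩ := x
  have hpow : q ^ ((j : ℤ) - i) * q ^ ((i : ℤ) - j) = 1 := by
    rw [← zpow_add₀ hq, sub_add_sub_cancel, sub_self, zpow_zero]
  simp only [res, nodeTranspose]
  rw [mul_mul_mul_comm, hpow, one_mul]

theorem res_nodeTranspose {P : K} (hq : q ≠ 0) (hP : P ≠ 0) (hQ : ∀ k, Q k * Q k.rev = P)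
    (x : ℕ × ℕ × Fin r) : res q Q (nodeTranspose x) = P / res q Q x := by
  have hmul : res q Q x * res q Q (nodeTranspose x) = P :=
    (res_mul_res_nodeTranspose hq x).trans (hQ x.2.2)
  exact eq_div_of_mul_eq (left_ne_zero_of_mul (hmul ▸ hP)) ((mul_comm _ _).trans hmul)

theorem resCount_mconj {P : K} (hq : q ≠ 0) (hP : P ≠ 0) (hQ : ∀ k, Q k * Q k.rev = P)
    {lam : Fin r → ℕ → ℕ} (hlam : IsMultipartition lam) (f : K) :
    resCount q Q (mconj lam) f = resCount q Q lam (P / f) := by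
  have hres (x : ℕ × ℕ × Fin r) :
      res q Q x = f ↔ res q Q (nodeTranspose x) = P / f := by
    rw [res_nodeTranspose hq hP hQ]
    exact (Equiv.divLeft₀ P hP).apply_eq_iff_eq.symm
  have hpre : {x ∈ mDiagram (mconj lam) | res q Q x = f} =
      nodeTranspose ⁻¹' {x ∈ mDiagram lam | res q Q x = P / f} :=
    Set.ext fun x => and_congr (mem_mDiagram_mconj_iff hlam) (hres x)
  rw [resCount, resCount, hpre]
  exact Set.ncard_preimage_of_injective_subset_range nodeTranspose_involutive.injective
    fun x _ => nodeTranspose_involutive.surjective x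

theorem sum_sq_diff_resCount_conj_general {P : K} (hq : q ≠ 0) (hP : P ≠ 0)
    (hQ : ∀ k, Q k * Q k.rev = P) {lam : Fin r → ℕ → ℕ} (hlam : IsMultipartition lam) :
    (∑ᶠ f ∈ {f : K | f ≠ 0},
        ((resCount q Q lam f : ℤ) - (resCount q Q lam (q * f) : ℤ)) ^ 2) =
      ∑ᶠ f ∈ {f : K | f ≠ 0},
        ((resCount q Q (mconj lam) f : ℤ) - (resCount q Q (mconj lam) (q * f) : ℤ)) ^ 2 := by
  have hPq : P / q ≠ 0 := div_ne_zero hP hq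
  refine finsum_mem_eq_of_bijOn (fun f => P / q / f)
    ((Equiv.divLeft₀ (P / q) hPq).bijOn fun f => div_ne_zero_iff.trans (and_iff_right hPq))
    fun f _ => ?_
  have hleft : resCount q Q (mconj lam) (P / q / f) = resCount q Q lam (q * f) := by
    rw [resCount_mconj hq hP hQ hlam, div_div P q f, div_div_cancel₀ hP]
  have hright : resCount q Q (mconj lam) (q * (P / q / f)) = resCount q Q lam f := by
    rw [resCount_mconj hq hP hQ hlam, ← mul_div_assoc, mul_div_cancel₀ P hq, div_div_cancel₀ hP]
  rw [hleft, hright, sub_sq_comm]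

end Transpose

/-- For a bipartition `λ`,
`Σ_{f∈K^×} (c_f(λ) - c_{qf}(λ))² = Σ_{f∈K^×} (c_f(λ') - c_{qf}(λ'))²`. -/
theorem sum_sq_diff_resCount_conj {K : Type*} [Field K] (q : K) (hq0 : q ≠ 0) (hq1 : q ≠ 1)
    (a : Fin 2 → ℤ) (Q : Fin 2 → K) (hQ : ∀ k, Q k = q ^ a k)
    (lam : Fin 2 → ℕ → ℕ) (hlam : IsMultipartition lam) :
    (∑ᶠ f ∈ {f : K | f ≠ 0},
        (((resCount q Q lam f : ℤ) - (resCount q Q lam (q * f) : ℤ)) : ℤ) ^ 2) =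
      ∑ᶠ f ∈ {f : K | f ≠ 0},
        (((resCount q Q (mconj lam) f : ℤ) - (resCount q Q (mconj lam) (q * f) : ℤ)) : ℤ) ^ 2 := by
  have hQ0 : ∀ k, Q k ≠ 0 := fun k => hQ k ▸ zpow_ne_zero (a k) hq0
  exact sum_sq_diff_resCount_conj_general hq0 (mul_ne_zero (hQ0 0) (hQ0 1))
    (Fin.forall_fin_two.mpr ⟨rfl, mul_comm _ _⟩) hlam
end
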